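/- Let E be an open real interval. A function F : Eⁿ → E is a symmetric, nondecreasing, order invariant function if and only if there exists k ∈ [n] such that F(x) = x_{(k)}, the k-th order statistic, for all x ∈ Eⁿ. -/

import Mathlib

/-- The `k`-th order statistic. -/
def orderStat {α : Type*} [LinearOrder α] {n : ℕ} (x : Fin n → α) (k : Fin n) : α :=
  x (Tuple.sort x k)

noncomputable def bumpF (p q c d x : ℝ) : ℝ :=
  if x ≤ p then x else if x ≤ c then p + (x - p) * ((d - p) / (c - p))
  else if x ≤ q then q - (q - x) * ((q - d) / (q - c)) else x

theorem bumpF_low {p q c d x : ℝ} (h : x ≤ p) : bumpF p q c d x = x := by simp [bumpF, h]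

theorem bumpF_high {p q c d x : ℝ} (h1 : p < c) (h2 : c < q) (h : q ≤ x) :
    bumpF p q c d x = x := by
  unfold bumpF
  rw [if_neg (by linarith), if_neg (by linarith)]
  split_ifs with h3
  · have : q = x := le_antisymm h h3
    subst this; simp
  · rfl

theorem bumpF_mid1 {p q c d x : ℝ} (h : p < x) (h' : x ≤ c) :
    bumpF p q c d x = p + (x - p) * ((d - p) / (c - p)) := by
  unfold bumpF
  rw [if_neg (by linarith), if_pos h']

theorem bumpF_mid2 {p q c d x : ℝ} (h1 : p < c) (h : c < x) (h' : x ≤ q) :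
    bumpF p q c d x = q - (q - x) * ((q - d) / (q - c)) := by
  unfold bumpF
  rw [if_neg (by linarith), if_neg (by linarith), if_pos h']

theorem bumpF_c {p q c d : ℝ} (h1 : p < c) : bumpF p q c d c = d := by
  rw [bumpF_mid1 h1 le_rfl]
  have : c - p ≠ 0 := by linarith
  field_simp; ring

theorem bumpF_range1 {p q c d x : ℝ} (h1 : p < c) (h3 : p < d)
    (h : p < x) (h' : x ≤ c) : p < bumpF p q c d x ∧ bumpF p q c d x ≤ d := by
  rw [bumpF_mid1 h h']
  have hs : 0 < (d - p) / (c - p) := div_pos (by linarith) (by linarith)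
  have e : (c - p) * ((d - p) / (c - p)) = d - p := by
    have : c - p ≠ 0 := by linarith
    field_simp
  constructor
  · nlinarith [mul_pos (sub_pos.2 h) hs]
  · nlinarith [mul_le_mul_of_nonneg_right (sub_le_sub_right h' p) hs.le]

theorem bumpF_range2 {p q c d x : ℝ} (h1 : p < c) (h2 : c < q) (h4 : d < q)
    (h : c < x) (h' : x ≤ q) : d < bumpF p q c d x ∧ bumpF p q c d x ≤ q := by
  rw [bumpF_mid2 h1 h h']
  have hs : 0 < (q - d) / (q - c) := div_pos (by linarith) (by linarith)
  have e : (q - c) * ((q - d) / (q - c)) = q - d := by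
    have : q - c ≠ 0 := by linarith
    field_simp
  constructor
  · nlinarith [mul_lt_mul_of_pos_right (sub_lt_sub_left h q) hs]
  · nlinarith [mul_nonneg (sub_nonneg.2 h') hs.le]

theorem bumpF_inv {p q c d : ℝ} (h1 : p < c) (h2 : c < q) (h3 : p < d) (h4 : d < q) (x : ℝ) :
    bumpF p q d c (bumpF p q c d x) = x := by
  have n1 : c - p ≠ 0 := by linarith
  have n2 : q - c ≠ 0 := by linarith
  have n3 : d - p ≠ 0 := by linarith
  have n4 : q - d ≠ 0 := by linarith
  rcases le_or_gt x p with h | h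
  · rw [bumpF_low h, bumpF_low h]
  rcases le_or_gt x c with h' | h'
  · obtain ⟨r1, r2⟩ := bumpF_range1 (q := q) h1 h3 h h'
    rw [bumpF_mid1 r1 r2, bumpF_mid1 h h']
    field_simp; ring
  rcases le_or_gt x q with h'' | h''
  · obtain ⟨r1, r2⟩ := bumpF_range2 h1 h2 h4 h' h''
    rw [bumpF_mid2 h3 r1 r2, bumpF_mid2 h1 h' h'']
    field_simp; ring
  · rw [bumpF_high h1 h2 h''.le, bumpF_high h3 h4 h''.le]

theorem bumpF_mono {p q c d : ℝ} (h1 : p < c) (h2 : c < q) (h3 : p < d) (h4 : d < q) :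
    Monotone (bumpF p q c d) := by
  intro x y hxy
  have hs : 0 < (q - d) / (q - c) := div_pos (by linarith) (by linarith)
  have hs' : 0 < (d - p) / (c - p) := div_pos (by linarith) (by linarith)
  have key : ∀ z, (z ≤ p ∧ bumpF p q c d z = z) ∨
      (p < z ∧ z ≤ c ∧ p < bumpF p q c d z ∧ bumpF p q c d z ≤ d ∧
        bumpF p q c d z = p + (z - p) * ((d - p) / (c - p))) ∨
      (c < z ∧ z ≤ q ∧ d < bumpF p q c d z ∧ bumpF p q c d z ≤ q ∧
        bumpF p q c d z = q - (q - z) * ((q - d) / (q - c))) ∨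
      (q < z ∧ bumpF p q c d z = z) := by
    intro z
    rcases le_or_gt z p with h | h
    · exact Or.inl ⟨h, bumpF_low h⟩
    rcases le_or_gt z c with h' | h'
    · have := bumpF_range1 (q := q) h1 h3 h h'
      exact Or.inr (Or.inl ⟨h, h', this.1, this.2, bumpF_mid1 h h'⟩)
    rcases le_or_gt z q with h'' | h''
    · have := bumpF_range2 h1 h2 h4 h' h''
      exact Or.inr (Or.inr (Or.inl ⟨h', h'', this.1, this.2, bumpF_mid2 h1 h' h''⟩))
    · exact Or.inr (Or.inr (Or.inr ⟨h'', bumpF_high h1 h2 h''.le⟩))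
  have e1 := mul_le_mul_of_nonneg_right (sub_le_sub_right hxy p) hs'.le
  have e2 := mul_le_mul_of_nonneg_right (sub_le_sub_left hxy q) hs.le
  rcases key x with hx | hx | hx | hx <;> rcases key y with hy | hy | hy | hy <;> linarith

theorem exists_bump (E : Set ℝ) (hE : E.OrdConnected) {p q c d : ℝ} (hp : p ∈ E) (hq : q ∈ E)
    (h1 : p < c) (h2 : c < q) (h3 : p < d) (h4 : d < q) :
    ∃ φ : E → E, StrictMono φ ∧ Function.Bijective φ ∧
      (∀ x : E, (x : ℝ) = c → (φ x : ℝ) = d) ∧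
      (∀ x : E, (x : ℝ) ≤ p ∨ q ≤ (x : ℝ) → φ x = x) := by
  have maps : ∀ {c d : ℝ}, p < c → c < q → p < d → d < q → ∀ x ∈ E, bumpF p q c d x ∈ E := by
    intro c d h1 h2 h3 h4 x hx
    rcases le_or_gt x p with h | h
    · rwa [bumpF_low h]
    rcases le_or_gt q x with h' | h'
    · rwa [bumpF_high h1 h2 h']
    refine hE.out hp hq ⟨?_, ?_⟩
    · have := bumpF_mono h1 h2 h3 h4 h.le
      rwa [bumpF_low le_rfl] at this
    · have := bumpF_mono h1 h2 h3 h4 h'.le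
      rwa [bumpF_high h1 h2 le_rfl] at this
  let φ : E → E := fun x => ⟨bumpF p q c d x, maps h1 h2 h3 h4 x x.2⟩
  let ψ : E → E := fun x => ⟨bumpF p q d c x, maps h3 h4 h1 h2 x x.2⟩
  have l : Function.LeftInverse ψ φ := fun x => Subtype.ext (bumpF_inv h1 h2 h3 h4 x)
  have r : Function.RightInverse ψ φ := fun x => Subtype.ext (bumpF_inv h3 h4 h1 h2 x)
  refine ⟨φ, ?_, ⟨l.injective, r.surjective⟩, ?_, ?_⟩
  · refine Monotone.strictMono_of_injective ?_ l.injective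
    intro x y h
    exact bumpF_mono h1 h2 h3 h4 h
  · intro x hx
    show bumpF p q c d x = d
    rw [hx, bumpF_c h1]
  · rintro x (h | h)
    · exact Subtype.ext (bumpF_low h)
    · exact Subtype.ext (bumpF_high h1 h2 h)

theorem exists_below (E : Set ℝ) (hopen : IsOpen E) (x : E) : ∃ a : E, a < x := by
  obtain ⟨ε, hε, h⟩ := Metric.isOpen_iff.1 hopen x x.2
  refine ⟨⟨x - ε / 2, h ?_⟩, ?_⟩
  · rw [Metric.mem_ball, Real.dist_eq, abs_lt]; constructor <;> linarith
  · show (x : ℝ) - ε / 2 < x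
    linarith

theorem exists_above (E : Set ℝ) (hopen : IsOpen E) (x : E) : ∃ a : E, x < a := by
  obtain ⟨ε, hε, h⟩ := Metric.isOpen_iff.1 hopen x x.2
  refine ⟨⟨x + ε / 2, h ?_⟩, ?_⟩
  · rw [Metric.mem_ball, Real.dist_eq, abs_lt]; constructor <;> linarith
  · show (x : ℝ) < x + ε / 2
    linarith

theorem value_mem (n : ℕ) (E : Set ℝ) (hopen : IsOpen E) (hE : E.OrdConnected)
    (F : (Fin n → E) → E)
    (hF : ∀ φ : E → E, StrictMono φ → Function.Bijective φ →
        ∀ x : Fin n → E, F (fun i => φ (x i)) = φ (F x)) (x : Fin n → E) :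
    ∃ i, F x = x i := by
  by_contra hcon
  push Not at hcon
  have hfin : (Set.range fun i => (x i : ℝ)).Finite := Set.finite_range _
  have ho : IsOpen (E ∩ (Set.range fun i => (x i : ℝ))ᶜ) :=
    hopen.inter hfin.isClosed.isOpen_compl
  obtain ⟨ε, hε, h⟩ := Metric.isOpen_iff.1 ho (F x) ⟨(F x).2, by
    rintro ⟨i, hi⟩
    exact hcon i (Subtype.ext hi.symm)⟩
  have hb : ∀ t : ℝ, -ε < t → t < ε → (F x : ℝ) + t ∈ E ∩ (Set.range fun i => (x i : ℝ))ᶜ := by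
    intro t ht ht'
    apply h
    rw [Metric.mem_ball, Real.dist_eq, abs_lt]; constructor <;> linarith
  obtain ⟨φ, m, b, e1, e2⟩ := exists_bump E hE (c := F x) (d := F x + ε / 4)
    (hb (-(ε / 2)) (by linarith) (by linarith)).1
    (hb (ε / 2) (by linarith) (by linarith)).1 (by linarith) (by linarith) (by linarith)
    (by linarith)
  have h1 := hF φ m b x
  have h2 : (fun i => φ (x i)) = x := by
    funext i
    apply e2
    by_contra hc
    push Not at hc
    exact (hb ((x i : ℝ) - F x) (by linarith [hc.1]) (by linarith [hc.2])).2 ⟨i, by simp⟩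
  rw [h2] at h1
  have h3 := e1 (F x) rfl
  rw [← h1] at h3
  linarith

theorem two_trans (E : Set ℝ) (hopen : IsOpen E) (hE : E.OrdConnected) (a b c d : E)
    (hab : a < b) (hcd : c < d) :
    ∃ φ : E → E, StrictMono φ ∧ Function.Bijective φ ∧ φ a = c ∧ φ b = d := by
  have up : ∀ a b b' : E, a < b → a < b' →
      ∃ φ : E → E, StrictMono φ ∧ Function.Bijective φ ∧ φ a = a ∧ φ b = b' := by
    intro a b b' h h'
    obtain ⟨q, hq⟩ := exists_above E hopen (max b b')
    obtain ⟨hq1, hq2⟩ := max_lt_iff.1 hq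
    obtain ⟨φ, m, b, e1, e2⟩ := exists_bump E hE (c := b) (d := b') a.2 q.2 h hq1 h' hq2
    exact ⟨φ, m, b, e2 _ (Or.inl le_rfl), Subtype.ext (e1 _ rfl)⟩
  have dn : ∀ a a' b : E, a < b → a' < b →
      ∃ φ : E → E, StrictMono φ ∧ Function.Bijective φ ∧ φ a = a' ∧ φ b = b := by
    intro a a' b h h'
    obtain ⟨p, hp⟩ := exists_below E hopen (min a a')
    obtain ⟨hp1, hp2⟩ := lt_min_iff.1 hp
    obtain ⟨φ, m, b, e1, e2⟩ := exists_bump E hE (c := a) (d := a') p.2 b.2 hp1 h hp2 h'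
    exact ⟨φ, m, b, Subtype.ext (e1 _ rfl), e2 _ (Or.inr le_rfl)⟩
  have h1 : a < max b d := lt_max_of_lt_left hab
  have h2 : c < max b d := lt_max_of_lt_right hcd
  obtain ⟨f, f1, f2, f3, f4⟩ := up a b (max b d) hab h1
  obtain ⟨g, g1, g2, g3, g4⟩ := dn a c (max b d) h1 h2
  obtain ⟨k, k1, k2, k3, k4⟩ := up c (max b d) d h2 hcd
  exact ⟨k ∘ g ∘ f, k1.comp (g1.comp f1), k2.comp (g2.comp f2), by simp [f3, g3, k3],
    by simp only [Function.comp, f4, g4, k4]⟩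

theorem orderStat_monotone {α : Type*} [LinearOrder α] {n : ℕ} (k : Fin n) :
    Monotone (fun x : Fin n → α => orderStat x k) := by
  intro x y hxy
  by_contra hc
  simp only [orderStat, not_le] at hc
  have hx := Tuple.monotone_sort x
  have hy := Tuple.monotone_sort y
  have hsub : (Finset.Iic k).image (Tuple.sort y) ⊆ (Finset.Iio k).image (Tuple.sort x) := by
    intro i hi
    simp only [Finset.mem_image, Finset.mem_Iic, Finset.mem_Iio] at hi ⊢
    obtain ⟨j, hj, rfl⟩ := hi
    refine ⟨(Tuple.sort x).symm (Tuple.sort y j), ?_, by simp⟩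
    by_contra hk
    have h1 := hx (not_lt.1 hk)
    have h2 := hy hj
    simp only [Function.comp, Equiv.apply_symm_apply] at h1 h2
    exact absurd (h1.trans ((hxy _).trans h2)) (not_le.2 hc)
  have := Finset.card_le_card hsub
  rw [Finset.card_image_of_injective _ (Equiv.injective _),
    Finset.card_image_of_injective _ (Equiv.injective _)] at this
  simp at this

/-- On an open real interval `E`, the symmetric nondecreasing order invariant functions
`F : Eⁿ → E` are exactly the order statistics. -/
theorem symmetric_nondecreasing_orderInvariant_iff_orderStat (n : ℕ) (E : Set ℝ)
    (hne : E.Nonempty) (hopen : IsOpen E) (hE : E.OrdConnected)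
    (F : (Fin n → E) → E) :
    ((∀ (σ : Equiv.Perm (Fin n)) (x : Fin n → E), F (x ∘ σ) = F x) ∧
      Monotone F ∧
      ∀ φ : E → E, StrictMono φ → Function.Bijective φ →
        ∀ x : Fin n → E, F (fun i => φ (x i)) = φ (F x)) ↔
    ∃ k : Fin n, ∀ x : Fin n → E, F x = orderStat x k := by
  constructor
  · rintro ⟨hsym, hmono, hinv⟩
    have hmem := value_mem n E hopen hE F hinv
    let v : ℕ → E → E → Fin n → E := fun j a b i => if i.1 < j then a else b
    have vmem : ∀ j a b, F (v j a b) = a ∨ F (v j a b) = b := by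
      intro j a b
      obtain ⟨i, hi⟩ := hmem (v j a b)
      rw [hi]
      simp only [v]
      split_ifs <;> simp
    have indep : ∀ j (a b c d : E), a < b → c < d → F (v j a b) = b → F (v j c d) = d := by
      intro j a b c d hab hcd h
      obtain ⟨φ, m, bi, e1, e2⟩ := two_trans E hopen hE a b c d hab hcd
      have := hinv φ m bi (v j a b)
      rw [h, e2] at this
      refine Eq.trans ?_ this
      congr 1
      funext i
      simp only [v]
      split_ifs <;> simp [e1, e2]
    obtain ⟨e, he⟩ := hne
    obtain ⟨b0, hab0⟩ := exists_above E hopen ⟨e, he⟩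
    generalize (⟨e, he⟩ : E) = a0 at hab0
    have P0 : F (v 0 a0 b0) = b0 := by
      obtain ⟨i, hi⟩ := hmem (v 0 a0 b0)
      rw [hi]; simp [v]
    have Pn : F (v n a0 b0) ≠ b0 := by
      obtain ⟨i, hi⟩ := hmem (v n a0 b0)
      rw [hi]; simp [v, hab0.ne]
    have hex : ∃ k, k < n ∧ F (v k a0 b0) = b0 ∧ F (v (k+1) a0 b0) ≠ b0 := by
      by_contra hc
      push Not at hc
      have : ∀ j, j ≤ n → F (v j a0 b0) = b0 := by
        intro j
        induction j with
        | zero => intro _; exact P0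
        | succ j ih => intro h; exact hc j (by omega) (ih (by omega))
      exact Pn (this n le_rfl)
    obtain ⟨k, hk, hk1, hk2⟩ := hex
    refine ⟨⟨k, hk⟩, fun x => ?_⟩
    rw [← hsym (Tuple.sort x) x]
    have hy : Monotone (x ∘ Tuple.sort x) := Tuple.monotone_sort x
    change F (x ∘ Tuple.sort x) = (x ∘ Tuple.sort x) ⟨k, hk⟩
    generalize x ∘ Tuple.sort x = y at hy
    obtain ⟨a, ha⟩ := exists_below E hopen (y ⟨0, by omega⟩)
    obtain ⟨b, hb⟩ := exists_above E hopen (y ⟨n - 1, by omega⟩)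
    have ha' : ∀ i, a < y i := fun i => ha.trans_le (hy (Fin.mk_le_of_le_val (Nat.zero_le _)))
    have hb' : ∀ i, y i < b := fun i => lt_of_le_of_lt (hy (by
      rw [Fin.le_def]; simp only; omega)) hb
    apply le_antisymm
    · have h1 : F (v (k+1) (y ⟨k, hk⟩) b) = y ⟨k, hk⟩ := by
        rcases vmem (k+1) (y ⟨k, hk⟩) b with h | h
        · exact h
        · exact absurd (indep _ _ _ a0 b0 (hb' _) hab0 h) hk2
      refine (hmono ?_).trans h1.le
      intro i
      simp only [v]
      split_ifs with hi
      · exact hy (by rw [Fin.le_def]; simp only; omega)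
      · exact (hb' i).le
    · have h1 := indep _ _ _ a (y ⟨k, hk⟩) hab0 (ha' _) hk1
      refine h1.ge.trans (hmono ?_)
      intro i
      simp only [v]
      split_ifs with hi
      · exact (ha' i).le
      · exact hy (by rw [Fin.le_def]; simp only; omega)
  · rintro ⟨k, hk⟩
    refine ⟨fun σ x => ?_, ?_, fun φ m _ x => ?_⟩
    · rw [hk, hk]
      exact congrFun (Tuple.comp_perm_comp_sort_eq_comp_sort (f := x) (σ := σ)) k
    · intro x y h
      rw [hk, hk]
      exact orderStat_monotone k h
    · rw [hk, hk]
      have h : Monotone ((fun i => φ (x i)) ∘ Tuple.sort x) :=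
        m.monotone.comp (Tuple.monotone_sort x)
      exact (congrFun (Tuple.comp_sort_eq_comp_iff_monotone.2 h) k).symm
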